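/- Let P be a finite graded simplicial poset of rank n with positive h-vector, let P̂ be P with a top element adjoined, and let P̂* be the dual (order-reversed) poset of P̂, whose flag h-vector satisfies β_{P̂*}(S) = β_{P̂}({n+1−s : s ∈ S}). Then the Chow polynomial H_{P̂*}(x) = Σ_{S ⊆ {2,…,n}, S isolated} β_{P̂*}(S) · x^{|S|} · (1+x)^{n−2|S|} is real-rooted. -/

import Mathlib

open Polynomial

noncomputable section

/-- A real polynomial is *real-rooted* if all of its complex roots are real.
(The zero polynomial is real-rooted by convention.) -/
def RealRooted (f : Polynomial ℝ) : Prop :=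
  ∀ z ∈ (f.map (algebraMap ℝ ℂ)).roots, z.im = 0

/-- All coefficients of the polynomial are nonnegative. -/
def NonnegCoeffs (f : Polynomial ℝ) : Prop := ∀ i, 0 ≤ f.coeff i

/-- The list of real roots of `f`, with multiplicity, in weakly decreasing order. -/
def descRoots (f : Polynomial ℝ) : List ℝ := (f.roots.sort (· ≤ ·)).reverse

/-- The interlacing condition on the weakly decreasing root sequences
`α` of `f` and `β` of `g` : `β₁ ≥ α₁ ≥ β₂ ≥ α₂ ≥ …`, together with the
degree condition `deg g ∈ {deg f, deg f + 1}`. -/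
def InterlacesAux (f g : Polynomial ℝ) : Prop :=
  (g.natDegree = f.natDegree ∨ g.natDegree = f.natDegree + 1) ∧
  (∀ (i : ℕ) (hf : i < (descRoots f).length) (hg : i < (descRoots g).length),
      (descRoots f).get ⟨i, hf⟩ ≤ (descRoots g).get ⟨i, hg⟩) ∧
  (∀ (i : ℕ) (hf : i < (descRoots f).length) (hg : i + 1 < (descRoots g).length),
      (descRoots g).get ⟨i + 1, hg⟩ ≤ (descRoots f).get ⟨i, hf⟩)

/-- `f ⪯ g` : `f` interlaces `g`.  Both polynomials are required to be real-rooted;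
by convention `0 ⪯ 0`, `0 ⪯ f`, `f ⪯ 0`, and any two polynomials of degree at most 1
interlace. -/
def Interlaces (f g : Polynomial ℝ) : Prop :=
  RealRooted f ∧ RealRooted g ∧
  (f = 0 ∨ g = 0 ∨ (f.natDegree ≤ 1 ∧ g.natDegree ≤ 1) ∨ InterlacesAux f g)

/-- A finite family of real-rooted polynomials is an interlacing sequence if
`F i ⪯ F j` for all `i < j`. -/
def InterlacingSeq {n : ℕ} (F : Fin n → Polynomial ℝ) : Prop :=
  ∀ i j : Fin n, i < j → Interlaces (F i) (F j)

/-- A polynomial of degree `d` is palindromic if `coeff i = coeff (d - i)` for all `i ≤ d`. -/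
def Palindromic (f : Polynomial ℝ) : Prop :=
  ∀ i ≤ f.natDegree, f.coeff i = f.coeff (f.natDegree - i)

/-- A set `S ⊆ ℕ` is isolated if `i ∈ S` implies `i + 1 ∉ S`. -/
def IsolatedSet (S : Finset ℕ) : Prop := ∀ i ∈ S, i + 1 ∉ S

instance : DecidablePred IsolatedSet := fun S =>
  decidable_of_iff (∀ i ∈ S, i + 1 ∉ S) Iff.rfl

/-- The descent set of a permutation `w` of `{1, …, n+1}` (encoded as a permutation of
`Fin (n+1)`), as a subset of `{1, …, n}` : `Des(w) = {i ∈ {1,…,n} : w(i) > w(i+1)}`. -/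
def desSet {n : ℕ} (w : Equiv.Perm (Fin (n + 1))) : Finset ℕ :=
  (Finset.univ.filter (fun i : Fin n => w i.succ < w i.castSucc)).image
    (fun i => i.val + 1)

/-- The polynomial `p_{n,k}^{S ⊆ T}(x) = Σ x^{des(w)}`, the sum over all permutations `w`
of `{1, …, n+1}` with `w(1) = k + 1`, `Des(w)` isolated and `S ⊆ Des(w) ⊆ T`. -/
def pPoly (n k : ℕ) (S T : Finset ℕ) : Polynomial ℝ :=
  ∑ w ∈ Finset.univ.filter (fun w : Equiv.Perm (Fin (n + 1)) =>
      (w 0 : ℕ) = k ∧ IsolatedSet (desSet w) ∧ S ⊆ desSet w ∧ desSet w ⊆ T),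
    Polynomial.X ^ (desSet w).card

/-- The shifted set `S - 1 = {i - 1 : i ∈ S} ∩ {1, …, n-1}`. -/
def shiftDown (n : ℕ) (S : Finset ℕ) : Finset ℕ :=
  (S.image (fun i => i - 1)) ∩ Finset.Icc 1 (n - 1)

section Poset

variable (P : Type*) [Fintype P] [PartialOrder P] [OrderBot P]

/-- A finite poset `P` with a minimum is simplicial of rank `n` if for every maximal
element `m` the interval `[⊥, m]` is order-isomorphic to the boolean lattice of
subsets of an `n`-element set. -/
def SimplicialOfRank (n : ℕ) : Prop :=
  ∀ m : P, IsMax m → Nonempty ((Set.Icc (⊥ : P) m) ≃o Finset (Fin n))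

variable {P}

/-- `rk` is a rank function: `rk ⊥ = 0` and ranks increase by one along covers. -/
def IsRankFunction (rk : P → ℕ) : Prop :=
  rk ⊥ = 0 ∧ ∀ a b : P, a ⋖ b → rk b = rk a + 1

/-- `f_{i-1}` : the number of elements of `P` of rank `i`. -/
def fvec (rk : P → ℕ) (i : ℕ) : ℕ := (Finset.univ.filter (fun x => rk x = i)).card

/-- The generating polynomial `Σ_{i=0}^n h_i x^i = Σ_{i=0}^n f_{i-1} x^i (1-x)^{n-i}`
of the h-vector of `P`. -/
def hPoly (rk : P → ℕ) (n : ℕ) : Polynomial ℤ :=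
  ∑ i ∈ Finset.range (n + 1),
    Polynomial.C (fvec rk i : ℤ) * Polynomial.X ^ i * (1 - Polynomial.X) ^ (n - i)

/-- The h-vector entry `h_k` of `P`. -/
def hvec (rk : P → ℕ) (n k : ℕ) : ℤ := (hPoly rk n).coeff k

/-- The flag f-vector `α_{P̂}(T)` : the number of chains in `P̂ ∖ {0̂, 1̂} = P ∖ {⊥}`
whose set of ranks is exactly `T`. -/
def flagF (rk : P → ℕ) (T : Finset ℕ) : ℕ :=
  Nat.card {c : Finset P // IsChain (· ≤ ·) (c : Set P) ∧ (⊥ : P) ∉ c ∧ c.image rk = T}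

/-- The flag h-vector `β_{P̂}(S) = Σ_{T ⊆ S} (-1)^{|S ∖ T|} α_{P̂}(T)`. -/
def flagH (rk : P → ℕ) (S : Finset ℕ) : ℤ :=
  ∑ T ∈ S.powerset, (-1) ^ ((S \ T).card) * (flagF rk T : ℤ)

/-- The flag h-vector of the dual poset `P̂*` : `β_{P̂*}(S) = β_{P̂}({n+1-s : s ∈ S})`. -/
def flagHDual (rk : P → ℕ) (n : ℕ) (S : Finset ℕ) : ℤ :=
  flagH rk (S.image (fun s => n + 1 - s))

/-- The Chow polynomial
`H_{P̂}(x) = Σ_{S ⊆ {2,…,n} isolated} β_{P̂}(S) x^{|S|} (1+x)^{n-2|S|}`. -/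
def chowPoly (rk : P → ℕ) (n : ℕ) : Polynomial ℝ :=
  ∑ S ∈ (Finset.Icc 2 n).powerset.filter IsolatedSet,
    (flagH rk S : ℝ) • (Polynomial.X ^ S.card * (1 + Polynomial.X) ^ (n - 2 * S.card))

/-- The augmented Chow polynomial
`H^aug_{P̂}(x) = Σ_{S ⊆ {1,…,n} isolated} β_{P̂}(S) x^{|S|} (1+x)^{n+1-2|S|}`. -/
def chowAugPoly (rk : P → ℕ) (n : ℕ) : Polynomial ℝ :=
  ∑ S ∈ (Finset.Icc 1 n).powerset.filter IsolatedSet,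
    (flagH rk S : ℝ) • (Polynomial.X ^ S.card * (1 + Polynomial.X) ^ (n + 1 - 2 * S.card))

/-- The Chow polynomial of the dual poset `P̂*`. -/
def chowDualPoly (rk : P → ℕ) (n : ℕ) : Polynomial ℝ :=
  ∑ S ∈ (Finset.Icc 2 n).powerset.filter IsolatedSet,
    (flagHDual rk n S : ℝ) • (Polynomial.X ^ S.card * (1 + Polynomial.X) ^ (n - 2 * S.card))

/-- The augmented Chow polynomial of the dual poset `P̂*`. -/
def chowAugDualPoly (rk : P → ℕ) (n : ℕ) : Polynomial ℝ :=
  ∑ S ∈ (Finset.Icc 1 n).powerset.filter IsolatedSet,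
    (flagHDual rk n S : ℝ) • (Polynomial.X ^ S.card * (1 + Polynomial.X) ^ (n + 1 - 2 * S.card))

end Poset

end


/-- Pointwise interlacing at `t`: the argument of `g/f` lies in `[0, arg t]`. -/
def RR (t f g : ℂ) : Prop :=
  0 ≤ (g * (starRingEnd ℂ) f).im ∧ 0 ≤ (t * f * (starRingEnd ℂ) g).im

namespace RR

variable {t f g h : ℂ}

theorem add_left (h1 : RR t f h) (h2 : RR t g h) : RR t (f + g) h := by
  obtain ⟨a, b⟩ := h1
  obtain ⟨c, d⟩ := h2
  constructor
  · rw [map_add, mul_add, Complex.add_im]; exact add_nonneg a c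
  · rw [mul_add, add_mul, Complex.add_im]; exact add_nonneg b d

theorem add_right (h1 : RR t f g) (h2 : RR t f h) : RR t f (g + h) := by
  obtain ⟨a, b⟩ := h1
  obtain ⟨c, d⟩ := h2
  constructor
  · rw [add_mul, Complex.add_im]; exact add_nonneg a c
  · rw [map_add, mul_add, Complex.add_im]; exact add_nonneg b d

theorem zero_left : RR t 0 g := by simp [RR]

theorem zero_right : RR t f 0 := by simp [RR]

theorem refl (ht : 0 < t.im) (f : ℂ) : RR t f f := by
  constructor
  · rw [Complex.mul_conj]; simp
  · rw [mul_assoc, Complex.mul_conj, Complex.im_mul_ofReal]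
    exact mul_nonneg ht.le (Complex.normSq_nonneg _)

theorem rot (h : RR t f g) : RR t g (t * f) := by
  obtain ⟨a, b⟩ := h
  refine ⟨b, ?_⟩
  have : t * g * (starRingEnd ℂ) (t * f) = (g * (starRingEnd ℂ) f) * (Complex.normSq t : ℂ) := by
    rw [map_mul, ← Complex.mul_conj]; ring
  rw [this, Complex.im_mul_ofReal]
  exact mul_nonneg a (Complex.normSq_nonneg _)

theorem smul_t (h : RR t f g) : RR t (t * f) (t * g) := h.rot.rot

theorem const_right {c : ℝ} (hc : 0 ≤ c) (h : RR t f g) : RR t f ((c : ℂ) * g) := by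
  obtain ⟨a, b⟩ := h
  constructor
  · rw [mul_assoc, Complex.im_ofReal_mul]; exact mul_nonneg hc a
  · have : t * f * (starRingEnd ℂ) (c * g) = (c : ℂ) * (t * f * (starRingEnd ℂ) g) := by
      rw [map_mul, Complex.conj_ofReal]; ring
    rw [this, Complex.im_ofReal_mul]; exact mul_nonneg hc b

theorem sum_left {ι : Type*} (s : Finset ι) (F : ι → ℂ) (H : ∀ i ∈ s, RR t (F i) g) :
    RR t (∑ i ∈ s, F i) g := by
  classical
  induction s using Finset.induction_on with
  | empty => simpa using zero_left
  | insert a s ha ih =>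
    rw [Finset.sum_insert ha]
    exact add_left (H a (by simp)) (ih fun i hi => H i (by simp [hi]))

theorem sum_right {ι : Type*} (s : Finset ι) (F : ι → ℂ) (H : ∀ i ∈ s, RR t f (F i)) :
    RR t f (∑ i ∈ s, F i) := by
  classical
  induction s using Finset.induction_on with
  | empty => simpa using zero_right
  | insert a s ha ih =>
    rw [Finset.sum_insert ha]
    exact add_right (H a (by simp)) (ih fun i hi => H i (by simp [hi]))

theorem sum_sum {ι κ : Type*} (s : Finset ι) (u : Finset κ) (F : ι → ℂ) (K : κ → ℂ)
    (H : ∀ i ∈ s, ∀ j ∈ u, RR t (F i) (K j)) :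
    RR t (∑ i ∈ s, F i) (∑ j ∈ u, K j) :=
  sum_left _ _ fun i hi => sum_right _ _ fun j hj => H i hi j hj

theorem add_ne_zero (ht : 0 < t.im) (hf : f ≠ 0) (h : RR t f g) : f + g ≠ 0 := by
  intro h0
  have hg : g = -f := by linear_combination h0
  obtain ⟨-, b⟩ := h
  rw [hg, map_neg, mul_neg, mul_assoc, Complex.mul_conj, Complex.neg_im,
    Complex.im_mul_ofReal] at b
  have := mul_pos ht (Complex.normSq_pos.2 hf)
  linarith

end RR

/-- The invariant. -/
structure ChowInv (t : ℂ) (n : ℕ) (G A : ℕ → ℂ) : Prop where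
  i1 : ∀ i j, i < j → j ≤ n → RR t (G i) (G j)
  i2 : ∀ i j, i ≤ n → j ≤ n → RR t (G i) (A j - G j)
  i3 : ∀ i j, i < j → j ≤ n → RR t (A i) (A j)
  i4 : A 0 = G 0
  i5 : G 0 ≠ 0

theorem ChowInv.step {t : ℂ} (ht : 0 < t.im) {n : ℕ} {G A G' A' : ℕ → ℂ} (I : ChowInv t n G A)
    (hG : ∀ i, i ≤ n + 1 → G' i = ∑ m ∈ Finset.Ico i (n + 1), A m)
    (hA : ∀ i, i ≤ n + 1 → A' i = G' i + t * ∑ l ∈ Finset.range i, G l) :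
    ChowInv t (n + 1) G' A' := by
  have hAsplit : ∀ s : Finset ℕ, ∑ m ∈ s, A m = ∑ m ∈ s, G m + ∑ m ∈ s, (A m - G m) := by
    intro s
    rw [← Finset.sum_add_distrib]
    exact Finset.sum_congr rfl fun m _ => by ring
  have i2' : ∀ i j, i ≤ n → j ≤ n → RR t (G i) (A j - G j) := I.i2
  constructor
  · intro i j hij hj
    rw [hG i (by omega), hG j hj, ← Finset.sum_Ico_consecutive A hij.le hj]
    refine RR.add_left (RR.sum_sum _ _ _ _ ?_) (RR.refl ht _)
    intro a ha b hb
    rw [Finset.mem_Ico] at ha hb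
    exact I.i3 a b (by omega) (by omega)
  · intro i j hi hj
    have : A' j - G' j = t * ∑ l ∈ Finset.range j, G l := by rw [hA j hj]; ring
    rw [this, hG i hi]
    apply RR.rot
    rw [hAsplit]
    refine RR.add_right ?_ (RR.sum_sum _ _ _ _ ?_)
    · rcases le_or_gt j i with hji | hij
      · refine RR.sum_sum _ _ _ _ ?_
        intro a ha b hb
        rw [Finset.mem_range] at ha
        rw [Finset.mem_Ico] at hb
        exact I.i1 a b (by omega) (by omega)
      · rw [← Finset.sum_range_add_sum_Ico G hij.le, ← Finset.sum_Ico_consecutive G hij.le hj]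
        refine RR.add_left (RR.add_right ?_ ?_) (RR.add_right (RR.refl ht _) ?_)
        all_goals
          refine RR.sum_sum _ _ _ _ ?_
          intro a ha b hb
          simp only [Finset.mem_range, Finset.mem_Ico] at ha hb
          exact I.i1 a b (by omega) (by omega)
    · intro a ha b hb
      simp only [Finset.mem_range, Finset.mem_Ico] at ha hb
      exact I.i2 a b (by omega) (by omega)
  · intro i j hij hj
    rw [hA i (by omega), hA j hj, hG i (by omega), hG j hj,
      ← Finset.sum_Ico_consecutive A hij.le hj, ← Finset.sum_range_add_sum_Ico G hij.le]
    set X := ∑ m ∈ Finset.Ico i j, A m with hX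
    set Y := ∑ m ∈ Finset.Ico j (n + 1), A m with hY
    set Z := ∑ l ∈ Finset.range i, G l with hZ
    set W := ∑ l ∈ Finset.Ico i j, G l with hW
    have hXY : RR t X Y := by
      refine RR.sum_sum _ _ _ _ ?_
      intro a ha b hb
      simp only [Finset.mem_range, Finset.mem_Ico] at ha hb
      exact I.i3 a b (by omega) (by omega)
    have hZW : RR t Z W := by
      refine RR.sum_sum _ _ _ _ ?_
      intro a ha b hb
      simp only [Finset.mem_range, Finset.mem_Ico] at ha hb
      exact I.i1 a b (by omega) (by omega)
    have hZX : RR t Z X := by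
      rw [hX, hAsplit]
      refine RR.add_right (RR.sum_sum _ _ _ _ ?_) (RR.sum_sum _ _ _ _ ?_)
      all_goals
        intro a ha b hb
        simp only [Finset.mem_range, Finset.mem_Ico] at ha hb
      · exact I.i1 a b (by omega) (by omega)
      · exact I.i2 a b (by omega) (by omega)
    have hZY : RR t Z Y := by
      rw [hY, hAsplit]
      refine RR.add_right (RR.sum_sum _ _ _ _ ?_) (RR.sum_sum _ _ _ _ ?_)
      all_goals
        intro a ha b hb
        simp only [Finset.mem_range, Finset.mem_Ico] at ha hb
      · exact I.i1 a b (by omega) (by omega)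
      · exact I.i2 a b (by omega) (by omega)
    have hWY : RR t W Y := by
      rw [hY, hAsplit]
      refine RR.add_right (RR.sum_sum _ _ _ _ ?_) (RR.sum_sum _ _ _ _ ?_)
      all_goals
        intro a ha b hb
        simp only [Finset.mem_range, Finset.mem_Ico] at ha hb
      · exact I.i1 a b (by omega) (by omega)
      · exact I.i2 a b (by omega) (by omega)
    have hWX : RR t W X := by
      rw [hX, hAsplit]
      refine RR.add_right (RR.refl ht _) (RR.sum_sum _ _ _ _ ?_)
      intro a ha b hb
      simp only [Finset.mem_range, Finset.mem_Ico] at ha hb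
      exact I.i2 a b (by omega) (by omega)
    rw [mul_add]
    have e1 : X + Y + t * Z = X + (Y + t * Z) := by ring
    have e2 : Y + (t * Z + t * W) = (Y + t * Z) + t * W := by ring
    rw [e1, e2]
    refine RR.add_left (RR.add_right (RR.add_right hXY hZX.rot) hWX.rot)
      (RR.add_right (RR.refl ht _) (RR.add_left hWY.rot hZW.smul_t))
  · rw [hA 0 (by omega)]; simp
  · rw [hG 0 (by omega), Finset.sum_eq_sum_Ico_succ_bot (by omega)]
    refine RR.add_ne_zero ht (by rw [I.i4]; exact I.i5) (RR.sum_right _ _ ?_)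
    intro a ha
    simp only [Finset.mem_Ico] at ha
    exact I.i3 0 a (by omega) (by omega)

/-- The product of binomial coefficients counting chains of subsets with rank set `T`
below (and including) a fixed element of rank `max T`. -/
def WW (T : Finset ℕ) : ℕ := ∏ t ∈ T, Nat.choose t ((T.filter (· < t)).sup id)

theorem WW_empty : WW ∅ = 1 := by simp [WW]

theorem WW_insert (m : ℕ) (T : Finset ℕ) (h : ∀ x ∈ T, x < m) :
    WW (insert m T) = Nat.choose m (T.sup id) * WW T := by
  have hm : m ∉ T := fun hm => lt_irrefl _ (h m hm)
  unfold WW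
  rw [Finset.prod_insert hm]
  congr 1
  · congr 2
    ext x
    simp only [Finset.mem_filter, Finset.mem_insert]
    constructor
    · rintro ⟨rfl | hx, h2⟩
      · omega
      · exact hx
    · intro hx; exact ⟨Or.inr hx, h x hx⟩
  · refine Finset.prod_congr rfl fun t ht => ?_
    congr 2
    ext x
    simp only [Finset.mem_filter, Finset.mem_insert]
    have := h t ht
    constructor
    · rintro ⟨rfl | hx, h2⟩
      · omega
      · exact ⟨hx, h2⟩
    · rintro ⟨hx, h2⟩; exact ⟨Or.inr hx, h2⟩

/-- Explicit flag count of the `k`-th basic vector. -/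
def FF (n k : ℕ) (T : Finset ℕ) : ℤ := (Nat.choose (n - k) (n - T.sup id) * WW T : ℕ)

/-- Its alternating sum. -/
def cc (n k : ℕ) (S : Finset ℕ) : ℤ :=
  ∑ T ∈ S.powerset, (-1) ^ ((S \ T).card) * FF n k T

theorem sup_le_of_subset_Icc {n : ℕ} {T : Finset ℕ} (hT : T ⊆ Finset.Icc 1 n) :
    T.sup id ≤ n :=
  Finset.sup_le fun x hx => (Finset.mem_Icc.1 (hT hx)).2

theorem hockey (n d k : ℕ) (hk : k ≤ n + 1) :
    ∑ j ∈ Finset.Ico k (n + 1), Nat.choose (n - j) d = Nat.choose (n + 1 - k) (d + 1) := by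
  induction hk using Nat.decreasingInduction with
  | self => simp
  | of_succ k hk ih =>
    rw [Finset.sum_eq_sum_Ico_succ_bot (by omega), ih]
    have : n + 1 - k = (n - k) + 1 := by omega
    rw [this, Nat.choose_succ_succ, show n + 1 - (k + 1) = n - k by omega]

theorem FF_succ (n k : ℕ) (hk : k ≤ n + 1) (T : Finset ℕ) (hT : T ⊆ Finset.Icc 1 n) :
    FF (n + 1) k T = ∑ j ∈ Finset.Ico k (n + 1), FF n j T := by
  unfold FF
  rw [← Nat.cast_sum, ← Finset.sum_mul, hockey n _ k hk]
  have := sup_le_of_subset_Icc hT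
  rw [show n + 1 - T.sup id = n - T.sup id + 1 by omega]

theorem FF_succ_insert (n k : ℕ) (T : Finset ℕ) (hT : T ⊆ Finset.Icc 1 n) :
    FF (n + 1) k (insert (n + 1) T) = ∑ j ∈ Finset.range (n + 1), FF n j T := by
  have hs := sup_le_of_subset_Icc hT
  unfold FF
  rw [← Nat.cast_sum, ← Finset.sum_mul, Finset.range_eq_Ico, hockey n _ 0 (by omega)]
  rw [WW_insert _ _ (fun x hx => by have := Finset.mem_Icc.1 (hT hx); omega)]
  rw [Finset.sup_insert]
  have : (id (n + 1) : ℕ) ⊔ T.sup id = n + 1 := sup_eq_left.2 (show T.sup id ≤ n + 1 by omega)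
  rw [this]
  rw [Nat.sub_self, Nat.choose_zero_right, one_mul, Nat.sub_zero,
    show n - T.sup id + 1 = (n + 1) - T.sup id by omega, Nat.choose_symm (by omega)]

theorem cc_succ (n k : ℕ) (hk : k ≤ n + 1) (S : Finset ℕ) (hS : S ⊆ Finset.Icc 1 n) :
    cc (n + 1) k S = ∑ j ∈ Finset.Ico k (n + 1), cc n j S := by
  unfold cc
  rw [Finset.sum_comm]
  refine Finset.sum_congr rfl fun T hT => ?_
  rw [FF_succ n k hk T ((Finset.mem_powerset.1 hT).trans hS), Finset.mul_sum]

theorem notMem_of_subset_Icc {n : ℕ} {T : Finset ℕ} (hT : T ⊆ Finset.Icc 1 n) : n + 1 ∉ T := by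
  intro h
  have := Finset.mem_Icc.1 (hT h)
  omega

theorem cc_succ_insert (n k : ℕ) (hk : k ≤ n + 1) (S : Finset ℕ) (hS : S ⊆ Finset.Icc 1 n) :
    cc (n + 1) k (insert (n + 1) S) = ∑ j ∈ Finset.range k, cc n j S := by
  have hn := notMem_of_subset_Icc hS
  have key : cc (n + 1) k (insert (n + 1) S) + cc (n + 1) k S
      = ∑ j ∈ Finset.range (n + 1), cc n j S := by
    unfold cc
    rw [Finset.sum_powerset_insert hn, Finset.sum_comm (s := Finset.range (n + 1)),
      ← Finset.sum_add_distrib, ← Finset.sum_add_distrib]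
    refine Finset.sum_congr rfl fun T hT => ?_
    have hTS := Finset.mem_powerset.1 hT
    have hnT : n + 1 ∉ T := fun h => hn (hTS h)
    rw [FF_succ_insert n k T (hTS.trans hS), ← Finset.mul_sum]
    have e1 : insert (n + 1) S \ T = insert (n + 1) (S \ T) := Finset.insert_sdiff_of_notMem _ hnT
    have e2 : insert (n + 1) S \ insert (n + 1) T = S \ T := by
      ext x
      simp only [Finset.mem_sdiff, Finset.mem_insert]
      constructor
      · rintro ⟨rfl | h, h2⟩
        · simp at h2
        · exact ⟨h, fun h3 => h2 (Or.inr h3)⟩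
      · rintro ⟨h, h2⟩
        refine ⟨Or.inr h, ?_⟩
        rintro (rfl | h3)
        · exact hn h
        · exact h2 h3
    rw [e1, e2, Finset.card_insert_of_notMem (by simp [hn])]
    ring
  rw [cc_succ n k hk S hS, ← Finset.sum_range_add_sum_Ico _ hk] at key
  linarith

/-- Isolated subsets of `{1,…,m}`. -/
def isoSets (m : ℕ) : Finset (Finset ℕ) := (Finset.Icc 1 m).powerset.filter IsolatedSet

theorem mem_isoSets {m : ℕ} {S : Finset ℕ} :
    S ∈ isoSets m ↔ S ⊆ Finset.Icc 1 m ∧ IsolatedSet S := by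
  simp [isoSets]

theorem isoSets_zero : isoSets 0 = {∅} := by
  ext S
  rw [mem_isoSets]
  simp only [Finset.mem_singleton]
  constructor
  · rintro ⟨h, -⟩; simpa using h
  · rintro rfl; simp [IsolatedSet]

theorem isoSets_mono (m : ℕ) : isoSets (m - 1) ⊆ isoSets m := by
  intro S
  rw [mem_isoSets, mem_isoSets]
  rintro ⟨h1, h2⟩
  exact ⟨h1.trans (Finset.Icc_subset_Icc_right (by omega)), h2⟩

theorem isoSets_succ (m : ℕ) :
    isoSets (m + 1) = isoSets m ∪ (isoSets (m - 1)).image (insert (m + 1)) := by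
  ext S
  simp only [Finset.mem_union, Finset.mem_image, mem_isoSets]
  constructor
  · rintro ⟨h1, h2⟩
    by_cases hm : m + 1 ∈ S
    · right
      refine ⟨S.erase (m + 1), ⟨?_, ?_⟩, Finset.insert_erase hm⟩
      · intro x hx
        rw [Finset.mem_erase] at hx
        have h3 := Finset.mem_Icc.1 (h1 hx.2)
        have h4 : x ≠ m := by rintro rfl; exact h2 _ hx.2 hm
        rw [Finset.mem_Icc]
        omega
      · intro i hi hi2
        exact h2 i (Finset.mem_of_mem_erase hi) (Finset.mem_of_mem_erase hi2)
    · left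
      refine ⟨?_, h2⟩
      intro x hx
      have h3 := Finset.mem_Icc.1 (h1 hx)
      have h4 : x ≠ m + 1 := by rintro rfl; exact hm hx
      rw [Finset.mem_Icc]
      omega
  · rintro (⟨h1, h2⟩ | ⟨S', ⟨h1, h2⟩, rfl⟩)
    · exact ⟨h1.trans (Finset.Icc_subset_Icc_right (by omega)), h2⟩
    · refine ⟨?_, ?_⟩
      · intro x hx
        rw [Finset.mem_insert] at hx
        rw [Finset.mem_Icc]
        rcases hx with rfl | hx
        · omega
        · have := Finset.mem_Icc.1 (h1 hx); omega
      · intro i hi hi2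
        rw [Finset.mem_insert] at hi hi2
        rcases hi with rfl | hi <;> rcases hi2 with hi2 | hi2
        · omega
        · have := Finset.mem_Icc.1 (h1 hi2); omega
        · have := Finset.mem_Icc.1 (h1 hi); omega
        · exact h2 i hi hi2

theorem card_isoSets (m : ℕ) : ∀ S ∈ isoSets m, 2 * S.card ≤ m + 1 := by
  induction m using Nat.strong_induction_on with
  | _ m ih =>
    intro S hS
    cases m with
    | zero => rw [isoSets_zero, Finset.mem_singleton] at hS; subst hS; simp
    | succ m =>
      rw [isoSets_succ, Finset.mem_union, Finset.mem_image] at hS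
      rcases hS with hS | ⟨S', hS', rfl⟩
      · have := ih m (by omega) S hS; omega
      · have h1 := Finset.card_insert_le (m + 1) S'
        rcases Nat.eq_zero_or_pos m with rfl | hm
        · rw [isoSets_zero, Finset.mem_singleton] at hS'; subst hS'; simp
        · have := ih (m - 1) (by omega) S' hS'
          omega

section gen

variable {K : Type*} [CommRing K] (t : K)

/-- generating polynomial over all isolated subsets of `{1,…,n}`. -/
def AA (n k : ℕ) : K := ∑ S ∈ isoSets n, (cc n k S : K) * t ^ S.card

/-- generating polynomial over all isolated subsets of `{1,…,n-1}`. -/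
def GG (n k : ℕ) : K := ∑ S ∈ isoSets (n - 1), (cc n k S : K) * t ^ S.card

theorem GG_succ (n k : ℕ) (hk : k ≤ n + 1) :
    GG t (n + 1) k = ∑ j ∈ Finset.Ico k (n + 1), AA t n j := by
  unfold GG AA
  rw [Finset.sum_comm, Nat.add_sub_cancel]
  refine Finset.sum_congr rfl fun S hS => ?_
  rw [cc_succ n k hk S (mem_isoSets.1 hS).1, Int.cast_sum, Finset.sum_mul]

theorem AA_succ (n k : ℕ) (hk : k ≤ n + 1) :
    AA t (n + 1) k = GG t (n + 1) k + t * ∑ j ∈ Finset.range k, GG t n j := by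
  have hsub : ∀ S ∈ isoSets (n - 1), S ⊆ Finset.Icc 1 n := fun S hS =>
    (mem_isoSets.1 (isoSets_mono n hS)).1
  unfold AA
  rw [isoSets_succ, Finset.sum_union, Finset.sum_image]
  · unfold GG
    rw [Nat.add_sub_cancel]
    congr 1
    rw [Finset.sum_comm, Finset.mul_sum]
    refine Finset.sum_congr rfl fun S hS => ?_
    have h := hsub S hS
    rw [cc_succ_insert n k hk S h, Finset.card_insert_of_notMem (notMem_of_subset_Icc h),
      Int.cast_sum, ← Finset.sum_mul]
    ring
  · intro S hS S' hS' h
    have h1 := notMem_of_subset_Icc (hsub S hS)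
    have h2 := notMem_of_subset_Icc (hsub S' hS')
    rw [← Finset.erase_insert h1, ← Finset.erase_insert h2]
    rw [h]
  · rw [Finset.disjoint_left]
    intro S hS hS'
    rw [Finset.mem_image] at hS'
    obtain ⟨S', -, rfl⟩ := hS'
    exact notMem_of_subset_Icc (mem_isoSets.1 hS).1 (Finset.mem_insert_self _ _)

theorem cc_zero : cc 0 0 ∅ = 1 := by
  simp [cc, FF, WW_empty]

theorem AA_zero : AA t 0 0 = 1 := by
  simp [AA, isoSets_zero, cc_zero]

theorem GG_zero : GG t 0 0 = 1 := by
  simp [GG, isoSets_zero, cc_zero]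

end gen

theorem cc_nonneg (n : ℕ) : ∀ k ≤ n, ∀ S ⊆ Finset.Icc 1 n, 0 ≤ cc n k S := by
  induction n with
  | zero =>
    intro k hk S hS
    have : S = ∅ := by simpa using hS
    subst this
    have : k = 0 := by omega
    subst this
    rw [cc_zero]; norm_num
  | succ n ih =>
    intro k hk S hS
    have key : ∀ S' ⊆ Finset.Icc 1 (n + 1), n + 1 ∉ S' → S' ⊆ Finset.Icc 1 n := by
      intro S' h1 hm x hx
      have h3 := Finset.mem_Icc.1 (h1 hx)
      have h4 : x ≠ n + 1 := by rintro rfl; exact hm hx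
      rw [Finset.mem_Icc]
      omega
    by_cases hm : n + 1 ∈ S
    · have h' : S.erase (n + 1) ⊆ Finset.Icc 1 n :=
        key _ ((Finset.erase_subset _ _).trans hS) (by simp)
      rw [← Finset.insert_erase hm, cc_succ_insert n k hk _ h']
      refine Finset.sum_nonneg fun j hj => ih j ?_ _ h'
      have := Finset.mem_range.1 hj; omega
    · have h' := key S hS hm
      rw [cc_succ n k hk S h']
      refine Finset.sum_nonneg fun j hj => ih j ?_ _ h'
      have := Finset.mem_Ico.1 hj; omega

section PosetPart

variable {P : Type*} [Fintype P] [PartialOrder P] [OrderBot P]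

theorem exists_model {n : ℕ} {rk : P → ℕ} (hrk : IsRankFunction rk)
    (hsimp : SimplicialOfRank P n) (x : P) :
    ∃ m, x ≤ m ∧ ∃ φ : (Set.Icc (⊥ : P) m) ≃o Finset (Fin n),
      ∀ y, rk y.1 = (φ y).card := by
  obtain ⟨m, hxm, hm⟩ := Finite.exists_le_maximal (p := fun _ : P => True) (a := x) trivial
  have hmax : IsMax m := fun b hb => hm.2 trivial hb
  obtain ⟨φ⟩ := hsimp m hmax
  refine ⟨m, hxm, φ, ?_⟩
  have key : ∀ s : Finset (Fin n), rk (φ.symm s).1 = s.card := by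
    intro s
    induction s using Finset.induction_on with
    | empty =>
      have : (φ.symm ∅).1 = ⊥ := by
        have h1 : φ.symm ∅ ≤ ⟨⊥, by simp⟩ := by
          rw [OrderIso.symm_apply_le]
          exact Finset.empty_subset _
        exact le_bot_iff.1 h1
      rw [this, hrk.1]; rfl
    | insert a s ha ih =>
      rw [Finset.card_insert_of_notMem ha, ← ih]
      apply hrk.2
      have h1 : φ.symm s ⋖ φ.symm (insert a s) := by
        exact (apply_covBy_apply_iff φ.symm).2 (Finset.covBy_insert ha)
      constructor
      · exact h1.1
      · intro c hc1 hc2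
        exact h1.2 (c := ⟨c, bot_le, hc2.le.trans (φ.symm (insert a s)).2.2⟩) hc1 hc2
  intro y
  simpa using key (φ y)

theorem rk_strictMono {n : ℕ} {rk : P → ℕ} (hrk : IsRankFunction rk)
    (hsimp : SimplicialOfRank P n) {x y : P} (h : x < y) : rk x < rk y := by
  obtain ⟨m, hym, φ, hφ⟩ := exists_model hrk hsimp y
  have h1 := hφ ⟨x, bot_le, h.le.trans hym⟩
  have h2 := hφ ⟨y, bot_le, hym⟩
  simp only at h1 h2
  rw [h1, h2]
  apply Finset.card_lt_card
  have : (⟨x, bot_le, h.le.trans hym⟩ : Set.Icc (⊥ : P) m) < ⟨y, bot_le, hym⟩ := h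
  exact φ.lt_iff_lt.2 this

open Classical in
theorem count_below {n : ℕ} {rk : P → ℕ} (hrk : IsRankFunction rk)
    (hsimp : SimplicialOfRank P n) (x : P) (i : ℕ) :
    (Finset.univ.filter (fun y => y ≤ x ∧ rk y = i)).card = Nat.choose (rk x) i := by
  obtain ⟨m, hxm, φ, hφ⟩ := exists_model hrk hsimp x
  have h2 := hφ ⟨x, bot_le, hxm⟩
  simp only at h2
  rw [h2, ← Finset.card_powersetCard]
  symm
  refine Finset.card_bij (fun s _ => (φ.symm s).1) ?_ ?_ ?_
  · intro s hs
    rw [Finset.mem_powersetCard] at hs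
    simp only [Finset.mem_filter, Finset.mem_univ, true_and]
    constructor
    · have : φ.symm s ≤ ⟨x, bot_le, hxm⟩ := by
        rw [OrderIso.symm_apply_le]; exact hs.1
      exact this
    · rw [hφ]; simpa using hs.2
  · intro s _ s' _ h
    exact φ.symm.injective (Subtype.ext h)
  · intro y hy
    simp only [Finset.mem_filter, Finset.mem_univ, true_and] at hy
    refine ⟨φ ⟨y, bot_le, hy.1.trans hxm⟩, ?_, by simp⟩
    rw [Finset.mem_powersetCard]
    constructor
    · exact φ.monotone (show (⟨y, bot_le, hy.1.trans hxm⟩ : Set.Icc (⊥ : P) m) ≤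
        ⟨x, bot_le, hxm⟩ from hy.1)
    · rw [← hφ]; exact hy.2

theorem rk_le {n : ℕ} {rk : P → ℕ} (hrk : IsRankFunction rk)
    (hsimp : SimplicialOfRank P n) (x : P) : rk x ≤ n := by
  obtain ⟨m, hxm, φ, hφ⟩ := exists_model hrk hsimp x
  have h2 := hφ ⟨x, bot_le, hxm⟩
  simp only at h2
  rw [h2]
  simpa using Finset.card_le_univ (φ ⟨x, bot_le, hxm⟩)

open Classical in
/-- chains with rank set `T` all of whose elements satisfy `Q` -/
noncomputable def chains (rk : P → ℕ) (Q : P → Prop) (T : Finset ℕ) : Finset (Finset P) :=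
  Finset.univ.filter fun c => (IsChain (· ≤ ·) (c : Set P) ∧ (⊥ : P) ∉ c ∧ c.image rk = T) ∧
    ∀ y ∈ c, Q y

open Classical in
theorem chains_empty (rk : P → ℕ) (Q : P → Prop) : (chains rk Q ∅).card = 1 := by
  have : chains rk Q ∅ = {∅} := by
    ext c
    simp only [chains, Finset.mem_filter, Finset.mem_univ, true_and, Finset.mem_singleton,
      Finset.image_eq_empty]
    constructor
    · rintro ⟨⟨-, -, h⟩, -⟩; exact h
    · rintro rfl; simp
  rw [this]; simp

open Classical in
theorem chains_insert {n : ℕ} {rk : P → ℕ} (hrk : IsRankFunction rk)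
    (hsimp : SimplicialOfRank P n) (Q : P → Prop) (hQ : ∀ x y, x ≤ y → Q y → Q x)
    (a : ℕ) (s : Finset ℕ) (ha : 0 < a) (has : ∀ i ∈ s, i < a) :
    (chains rk Q (insert a s)).card =
      ∑ y ∈ Finset.univ.filter (fun y => Q y ∧ rk y = a), (chains rk (· < y) s).card := by
  have hmono : ∀ {x y : P}, x < y → rk x < rk y := fun h => rk_strictMono hrk hsimp h
  have hc : chains rk Q (insert a s) =
      (Finset.univ.filter (fun y => Q y ∧ rk y = a)).biUnion
        fun y => (chains rk (· < y) s).image (insert y) := by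
    ext c
    simp only [Finset.mem_biUnion, Finset.mem_image, chains, Finset.mem_filter,
      Finset.mem_univ, true_and]
    constructor
    · rintro ⟨⟨h1, h2, h3⟩, h4⟩
      have hac : a ∈ c.image rk := by rw [h3]; simp
      obtain ⟨y, hyc, hya⟩ := Finset.mem_image.1 hac
      refine ⟨y, ⟨h4 y hyc, hya⟩, c.erase y, ⟨⟨?_, ?_, ?_⟩, ?_⟩, Finset.insert_erase hyc⟩
      · exact h1.mono (by simp)
      · intro h; exact h2 (Finset.mem_of_mem_erase h)
      · ext i
        rw [Finset.mem_image]
        constructor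
        · rintro ⟨z, hz, rfl⟩
          rw [Finset.mem_erase] at hz
          have hz2 : rk z ∈ insert a s := by rw [← h3]; exact Finset.mem_image_of_mem _ hz.2
          rw [Finset.mem_insert] at hz2
          rcases hz2 with hz2 | hz2
          · exfalso
            rcases h1 hz.2 hyc hz.1 with hle | hle
            · have := hmono (lt_of_le_of_ne hle hz.1); omega
            · have := hmono (lt_of_le_of_ne hle (Ne.symm hz.1)); omega
          · exact hz2
        · intro hi
          have : i ∈ c.image rk := by rw [h3]; simp [hi]
          obtain ⟨z, hz, rfl⟩ := Finset.mem_image.1 this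
          refine ⟨z, ?_, rfl⟩
          rw [Finset.mem_erase]
          refine ⟨?_, hz⟩
          rintro rfl
          have := has _ hi
          omega
      · intro z hz
        rw [Finset.mem_erase] at hz
        have hz2 : rk z ∈ insert a s := by rw [← h3]; exact Finset.mem_image_of_mem _ hz.2
        have hz3 : rk z ≤ a := by
          rw [Finset.mem_insert] at hz2
          rcases hz2 with hz2 | hz2
          · omega
          · exact (has _ hz2).le
        rcases h1 hz.2 hyc hz.1 with hle | hle
        · exact lt_of_le_of_ne hle hz.1
        · have := hmono (lt_of_le_of_ne hle (Ne.symm hz.1)); omega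
    · rintro ⟨y, ⟨hQy, hya⟩, c', ⟨⟨h1, h2, h3⟩, h4⟩, rfl⟩
      refine ⟨⟨?_, ?_, ?_⟩, ?_⟩
      · rw [Finset.coe_insert]
        exact h1.insert fun b hb _ => Or.inr (h4 b hb).le
      · rw [Finset.mem_insert]
        rintro (h | h)
        · rw [← h, hrk.1] at hya; omega
        · exact h2 h
      · rw [Finset.image_insert, h3, hya]
      · intro z hz
        rw [Finset.mem_insert] at hz
        rcases hz with rfl | hz
        · exact hQy
        · exact hQ _ _ (h4 z hz).le hQy
  rw [hc, Finset.card_biUnion]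
  · refine Finset.sum_congr rfl fun y _ => ?_
    apply Finset.card_image_of_injOn
    intro c1 hc1 c2 hc2 h
    simp only [chains, Finset.coe_filter, Finset.mem_univ, true_and, Set.mem_ofPred_eq] at hc1 hc2
    have n1 : y ∉ c1 := fun h => lt_irrefl _ (hc1.2 y h)
    have n2 : y ∉ c2 := fun h => lt_irrefl _ (hc2.2 y h)
    rw [← Finset.erase_insert n1, ← Finset.erase_insert n2, h]
  · intro y hy y' hy' hne
    rw [Function.onFun, Finset.disjoint_left]
    intro c hc1 hc2
    simp only [Finset.coe_filter, Finset.mem_univ, true_and, Set.mem_ofPred_eq] at hy hy'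
    simp only [chains, Finset.mem_image, Finset.mem_filter, Finset.mem_univ, true_and] at hc1 hc2
    obtain ⟨c1, h1, rfl⟩ := hc1
    obtain ⟨c2, h2, h⟩ := hc2
    have hy1 : y' ∈ insert y c1 := by rw [← h]; simp
    rw [Finset.mem_insert] at hy1
    rcases hy1 with hy1 | hy1
    · exact hne hy1.symm
    · have := hmono (h1.2 _ hy1)
      omega

theorem chains_below {n : ℕ} {rk : P → ℕ} (hrk : IsRankFunction rk)
    (hsimp : SimplicialOfRank P n) (T : Finset ℕ) :
    (∀ i ∈ T, 0 < i) → ∀ x : P, (∀ i ∈ T, i < rk x) →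
      (chains rk (· < x) T).card = Nat.choose (rk x) (T.sup id) * WW T := by
  classical
  induction T using Finset.induction_on_max with
  | empty => intro _ x _; simp [chains_empty, WW_empty]
  | insert a s has ih =>
    intro hp x hx
    rw [chains_insert hrk hsimp _ (fun x y h1 h2 => lt_of_le_of_lt h1 h2) a s
      (hp a (by simp)) has, WW_insert a s has]
    have hsup : (insert a s).sup id = a := by
      rw [Finset.sup_insert]
      exact sup_eq_left.2 (Finset.sup_le fun i hi => (has i hi).le)
    rw [hsup, ← count_below hrk hsimp x a]
    have hfe : Finset.univ.filter (fun y => y < x ∧ rk y = a) =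
        Finset.univ.filter (fun y => y ≤ x ∧ rk y = a) := by
      ext y
      simp only [Finset.mem_filter, Finset.mem_univ, true_and]
      constructor
      · rintro ⟨h1, h2⟩; exact ⟨h1.le, h2⟩
      · rintro ⟨h1, h2⟩
        refine ⟨lt_of_le_of_ne h1 ?_, h2⟩
        rintro rfl
        have := hx a (by simp)
        omega
    rw [hfe]
    rw [Finset.sum_congr rfl (g := fun _ => Nat.choose a (s.sup id) * WW s)]
    · rw [Finset.sum_const, smul_eq_mul]
    · intro y hy
      rw [Finset.mem_filter] at hy
      rw [ih (fun i hi => hp i (by simp [hi])) y (fun i hi => by rw [hy.2.2]; exact has i hi),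
        hy.2.2]

theorem flagF_eq_chains (rk : P → ℕ) (T : Finset ℕ) :
    flagF rk T = (chains rk (fun _ => True) T).card := by
  classical
  unfold flagF chains
  rw [Nat.card_eq_fintype_card, Fintype.card_subtype]
  congr 1
  ext c
  simp only [Finset.mem_filter, Finset.mem_univ, true_and, implies_true, and_true]

theorem fvec_zero {n : ℕ} {rk : P → ℕ} (hrk : IsRankFunction rk)
    (hsimp : SimplicialOfRank P n) : fvec rk 0 = 1 := by
  unfold fvec
  rw [Finset.card_eq_one]
  refine ⟨⊥, ?_⟩
  ext y
  simp only [Finset.mem_filter, Finset.mem_univ, true_and, Finset.mem_singleton]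
  constructor
  · intro h
    by_contra hne
    have := rk_strictMono hrk hsimp (bot_lt_iff_ne_bot.2 hne)
    omega
  · rintro rfl; exact hrk.1

theorem flagF_eq {n : ℕ} {rk : P → ℕ} (hrk : IsRankFunction rk)
    (hsimp : SimplicialOfRank P n) (T : Finset ℕ) (hp : ∀ i ∈ T, 0 < i) :
    flagF rk T = fvec rk (T.sup id) * WW T := by
  classical
  rw [flagF_eq_chains]
  induction T using Finset.induction_on_max with
  | empty => simp [chains_empty, WW_empty, fvec_zero hrk hsimp]
  | insert a s has _ =>
    rw [chains_insert hrk hsimp _ (fun x y h1 h2 => trivial) a s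
      (hp a (by simp)) has, WW_insert a s has]
    have hsup : (insert a s).sup id = a := by
      rw [Finset.sup_insert]
      exact sup_eq_left.2 (Finset.sup_le fun i hi => (has i hi).le)
    rw [hsup]
    rw [Finset.sum_congr rfl (g := fun _ => Nat.choose a (s.sup id) * WW s)]
    · rw [Finset.sum_const, smul_eq_mul]
      unfold fvec
      congr 2
      ext y; simp
    · intro y hy
      have hya : rk y = a := by simpa using hy
      rw [chains_below hrk hsimp s (fun i hi => hp i (by simp [hi])) y
        (fun i hi => by rw [hya]; exact has i hi), hya]

end PosetPart

theorem binomial_inversion (n : ℕ) (f : ℕ → ℤ) (p : Polynomial ℤ)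
    (hp : p = ∑ i ∈ Finset.range (n + 1),
      Polynomial.C (f i) * Polynomial.X ^ i * (1 - Polynomial.X) ^ (n - i))
    (i : ℕ) (hi : i ≤ n) :
    f i = ∑ k ∈ Finset.range (n + 1), p.coeff k * (Nat.choose (n - k) (n - i) : ℤ) := by
  have hdeg : p.natDegree < n + 1 := by
    rw [Nat.lt_succ_iff, hp]
    refine Polynomial.natDegree_sum_le_of_forall_le _ _ fun j hj => ?_
    have hj' : j ≤ n := by have := Finset.mem_range.1 hj; omega
    have h1 : (1 - Polynomial.X : Polynomial ℤ).natDegree ≤ 1 := by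
      refine (Polynomial.natDegree_sub_le _ _).trans ?_
      simp
    have h2 := Polynomial.natDegree_pow_le_of_le (n - j) h1
    have h3 : (Polynomial.C (f j) * Polynomial.X ^ j).natDegree ≤ j :=
      Polynomial.natDegree_C_mul_X_pow_le _ _
    refine Polynomial.natDegree_mul_le.trans ?_
    omega
  have key : (∑ j ∈ Finset.range (n + 1), Polynomial.C (f j : ℚ) * Polynomial.X ^ j) =
      ∑ k ∈ Finset.range (n + 1), Polynomial.C (p.coeff k : ℚ) *
        (Polynomial.X ^ k * (1 + Polynomial.X) ^ (n - k)) := by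
    apply Polynomial.eq_of_infinite_eval_eq
    refine Set.Infinite.mono (s := Set.Ioi (0 : ℚ)) ?_ (Set.Ioi_infinite 0)
    intro y hy
    have hy0 : (1 + y : ℚ) ≠ 0 := by
      have : (0 : ℚ) < y := hy
      positivity
    simp only [Set.mem_ofPred_eq, Polynomial.eval_finsetSum, Polynomial.eval_mul,
      Polynomial.eval_C, Polynomial.eval_pow, Polynomial.eval_X, Polynomial.eval_add,
      Polynomial.eval_one]
    have e1 : Polynomial.eval₂ (Int.castRingHom ℚ) (y / (1 + y)) p =
        ∑ k ∈ Finset.range (n + 1), (p.coeff k : ℚ) * (y / (1 + y)) ^ k := by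
      rw [Polynomial.eval₂_eq_sum_range' _ hdeg]; simp
    have e2 : Polynomial.eval₂ (Int.castRingHom ℚ) (y / (1 + y)) p =
        ∑ j ∈ Finset.range (n + 1), (f j : ℚ) * (y / (1 + y)) ^ j *
          (1 - y / (1 + y)) ^ (n - j) := by
      rw [hp, Polynomial.eval₂_finsetSum]
      refine Finset.sum_congr rfl fun j _ => ?_
      simp only [Polynomial.eval₂_mul, Polynomial.eval₂_pow, Polynomial.eval₂_sub,
        Polynomial.eval₂_C, Polynomial.eval₂_X, Polynomial.eval₂_one]
      simp only [eq_intCast]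
    have e3 := congrArg (fun q => (1 + y) ^ n * q) (e2.symm.trans e1)
    simp only [Finset.mul_sum] at e3
    have hs : 1 - y / (1 + y) = 1 / (1 + y) := by field_simp; ring
    have hpow : ∀ j ≤ n, (1 + y) ^ n = (1 + y) ^ j * (1 + y) ^ (n - j) := fun j hj => by
      rw [← pow_add]; congr 1; omega
    calc _ = _ := ?_
      _ = _ := e3
      _ = _ := ?_
    · refine Finset.sum_congr rfl fun j hj => ?_
      have hj' : j ≤ n := by have := Finset.mem_range.1 hj; omega
      rw [hs, hpow j hj', div_pow, div_pow]
      field_simp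
      simp
    · refine Finset.sum_congr rfl fun j hj => ?_
      have hj' : j ≤ n := by have := Finset.mem_range.1 hj; omega
      rw [hpow j hj', div_pow]
      field_simp
  have hc := congrArg (fun q => Polynomial.coeff q i) key
  simp only [Polynomial.finsetSum_coeff, Polynomial.coeff_C_mul, Polynomial.coeff_X_pow_mul',
    Polynomial.coeff_one_add_X_pow, Polynomial.coeff_X_pow] at hc
  have : (f i : ℚ) = ∑ k ∈ Finset.range (n + 1),
      (p.coeff k : ℚ) * (Nat.choose (n - k) (n - i) : ℚ) := by
    rw [Finset.sum_eq_single i] at hc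
    · rw [if_pos rfl, mul_one] at hc
      rw [hc]
      refine Finset.sum_congr rfl fun k hk => ?_
      have hk' : k ≤ n := by have := Finset.mem_range.1 hk; omega
      congr 1
      split_ifs with h
      · rw [← Nat.choose_symm (show i - k ≤ n - k by omega)]
        congr 2; omega
      · rw [Nat.choose_eq_zero_of_lt (by omega)]; simp
    · intro b _ hb
      rw [if_neg (Ne.symm hb), mul_zero]
    · intro h; exfalso; apply h; rw [Finset.mem_range]; omega
  exact_mod_cast this

section Final

variable {P : Type*} [Fintype P] [PartialOrder P] [OrderBot P]

theorem flagH_eq {n : ℕ} {rk : P → ℕ} (hrk : IsRankFunction rk)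
    (hsimp : SimplicialOfRank P n) (S : Finset ℕ) (hS : S ⊆ Finset.Icc 1 n) :
    flagH rk S = ∑ k ∈ Finset.range (n + 1), hvec rk n k * cc n k S := by
  unfold flagH cc
  simp only [Finset.mul_sum]
  rw [Finset.sum_comm]
  refine Finset.sum_congr rfl fun T hT => ?_
  have hTS := (Finset.mem_powerset.1 hT).trans hS
  rw [flagF_eq hrk hsimp T (fun i hi => (Finset.mem_Icc.1 (hTS hi)).1)]
  push_cast
  rw [binomial_inversion n (fun i => (fvec rk i : ℤ)) (hPoly rk n) rfl (T.sup id)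
    (sup_le_of_subset_Icc hTS), Finset.sum_mul, Finset.mul_sum]
  refine Finset.sum_congr rfl fun k _ => ?_
  unfold FF hvec
  push_cast
  ring

theorem hvec_zero {n : ℕ} {rk : P → ℕ} (hrk : IsRankFunction rk)
    (hsimp : SimplicialOfRank P n) : hvec rk n 0 = 1 := by
  have h := binomial_inversion n (fun i => (fvec rk i : ℤ)) (hPoly rk n) rfl 0 (by omega)
  simp only [fvec_zero hrk hsimp, Nat.sub_zero] at h
  rw [Finset.sum_eq_single 0] at h
  · simpa [hvec] using h.symm
  · intro b hb hb0
    rw [Nat.choose_eq_zero_of_lt]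
    · simp
    · have := Finset.mem_range.1 hb; omega
  · simp

theorem chowDual_reindex (n : ℕ) (rk : P → ℕ) :
    chowDualPoly rk n = ∑ S ∈ isoSets (n - 1),
      (flagH rk S : ℝ) • (Polynomial.X ^ S.card * (1 + Polynomial.X) ^ (n - 2 * S.card)) := by
  unfold chowDualPoly
  have hinv : ∀ S : Finset ℕ, (∀ x ∈ S, x ≤ n + 1) →
      (S.image (fun s => n + 1 - s)).image (fun s => n + 1 - s) = S := by
    intro S hS
    rw [Finset.image_image]
    conv_rhs => rw [← Finset.image_id (s := S)]
    refine Finset.image_congr fun x hx => ?_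
    have := hS x hx
    simp only [Function.comp, id]
    omega
  have hiso : ∀ S : Finset ℕ, (∀ x ∈ S, x ≤ n) → IsolatedSet S →
      IsolatedSet (S.image (fun s => n + 1 - s)) := by
    intro S hS hI i hi hi2
    obtain ⟨a, ha, rfl⟩ := Finset.mem_image.1 hi
    obtain ⟨b, hb, hab⟩ := Finset.mem_image.1 hi2
    have h1 := hS a ha
    have h2 := hS b hb
    apply hI b hb
    rw [show b + 1 = a by omega]
    exact ha
  refine Finset.sum_nbij' (fun S => S.image (fun s => n + 1 - s))
    (fun S => S.image (fun s => n + 1 - s)) ?_ ?_ ?_ ?_ ?_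
  · intro S hS
    rw [Finset.mem_filter, Finset.mem_powerset] at hS
    rw [mem_isoSets]
    refine ⟨?_, hiso S (fun x hx => (Finset.mem_Icc.1 (hS.1 hx)).2) hS.2⟩
    intro x hx
    obtain ⟨a, ha, rfl⟩ := Finset.mem_image.1 hx
    have := Finset.mem_Icc.1 (hS.1 ha)
    rw [Finset.mem_Icc]
    omega
  · intro S hS
    rw [mem_isoSets] at hS
    rw [Finset.mem_filter, Finset.mem_powerset]
    refine ⟨?_, hiso S (fun x hx => ?_) hS.2⟩
    · intro x hx
      obtain ⟨a, ha, rfl⟩ := Finset.mem_image.1 hx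
      have := Finset.mem_Icc.1 (hS.1 ha)
      rw [Finset.mem_Icc]
      omega
    · have := Finset.mem_Icc.1 (hS.1 hx); omega
  · intro S hS
    rw [Finset.mem_filter, Finset.mem_powerset] at hS
    exact hinv S fun x hx => by have := Finset.mem_Icc.1 (hS.1 hx); omega
  · intro S hS
    rw [mem_isoSets] at hS
    exact hinv S fun x hx => by have := Finset.mem_Icc.1 (hS.1 hx); omega
  · intro S hS
    rw [Finset.mem_filter, Finset.mem_powerset] at hS
    have hcard : (S.image (fun s => n + 1 - s)).card = S.card := by
      apply Finset.card_image_of_injOn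
      intro a ha b hb hab
      have h1 := Finset.mem_Icc.1 (hS.1 ha)
      have h2 := Finset.mem_Icc.1 (hS.1 hb)
      simp only at hab
      omega
    rw [hcard]
    rfl

end Final

theorem chowInv_all {t : ℂ} (ht : 0 < t.im) (n : ℕ) :
    ChowInv t n (fun k => GG t n k) (fun k => AA t n k) := by
  induction n with
  | zero =>
    constructor
    · intro i j h1 h2; omega
    · intro i j h1 h2
      have hi : i = 0 := by omega
      have hj : j = 0 := by omega
      subst hi hj
      simp only [GG_zero, AA_zero, sub_self]
      exact RR.zero_right
    · intro i j h1 h2; omega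
    · simp only [GG_zero, AA_zero]
    · simp [GG_zero]
  | succ n ih => exact ih.step ht (fun i hi => GG_succ t n i hi) (fun i hi => AA_succ t n i hi)

section Final2

variable {P : Type*} [Fintype P] [PartialOrder P] [OrderBot P]

/-- The gamma polynomial evaluated at `t`. -/
noncomputable def gam (K : Type*) [CommRing K] (n : ℕ) (rk : P → ℕ) (t : K) : K :=
  ∑ S ∈ isoSets (n - 1), (flagH rk S : K) * t ^ S.card

theorem isoSets_pred_sub {n : ℕ} {S : Finset ℕ} (hS : S ∈ isoSets (n - 1)) :
    S ⊆ Finset.Icc 1 n := (mem_isoSets.1 (isoSets_mono n hS)).1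

theorem gam_eq {K : Type*} [CommRing K] {n : ℕ} {rk : P → ℕ} (hrk : IsRankFunction rk)
    (hsimp : SimplicialOfRank P n) (t : K) :
    gam K n rk t = ∑ k ∈ Finset.range (n + 1), (hvec rk n k : K) * GG t n k := by
  unfold gam GG
  simp only [Finset.mul_sum]
  rw [Finset.sum_comm]
  refine Finset.sum_congr rfl fun S hS => ?_
  rw [flagH_eq hrk hsimp S (isoSets_pred_sub hS), Int.cast_sum, Finset.sum_mul]
  refine Finset.sum_congr rfl fun k _ => ?_
  push_cast
  ring

theorem gam_ne_zero_upper {n : ℕ} {rk : P → ℕ} (hrk : IsRankFunction rk)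
    (hsimp : SimplicialOfRank P n) (hpos : ∀ k, 0 ≤ hvec rk n k) {t : ℂ} (ht : 0 < t.im) :
    gam ℂ n rk t ≠ 0 := by
  have I := chowInv_all ht n
  rw [gam_eq hrk hsimp, Finset.range_eq_Ico, Finset.sum_eq_sum_Ico_succ_bot (by omega),
    hvec_zero hrk hsimp, Int.cast_one, one_mul]
  refine RR.add_ne_zero ht I.i5 (RR.sum_right _ _ ?_)
  intro k hk
  have hk' := Finset.mem_Ico.1 hk
  have h1 := RR.const_right (c := (hvec rk n k : ℝ)) (by exact_mod_cast hpos k)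
    (I.i1 0 k (by omega) (by omega))
  simpa using h1

theorem gam_pos_real {n : ℕ} {rk : P → ℕ} (hrk : IsRankFunction rk)
    (hsimp : SimplicialOfRank P n) (hpos : ∀ k, 0 ≤ hvec rk n k) {t : ℝ} (ht : 0 ≤ t) :
    0 < gam ℝ n rk t := by
  unfold gam
  have hnn : ∀ S ∈ isoSets (n - 1), 0 ≤ (flagH rk S : ℝ) * t ^ S.card := by
    intro S hS
    refine mul_nonneg ?_ (pow_nonneg ht _)
    rw [flagH_eq hrk hsimp S (isoSets_pred_sub hS)]
    have : 0 ≤ ∑ k ∈ Finset.range (n + 1), hvec rk n k * cc n k S := by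
      refine Finset.sum_nonneg fun k hk => mul_nonneg (hpos k) (cc_nonneg n k ?_ S
        (isoSets_pred_sub hS))
      have := Finset.mem_range.1 hk; omega
    exact_mod_cast this
  refine Finset.sum_pos' hnn ⟨∅, ?_, ?_⟩
  · rw [mem_isoSets]; simp [IsolatedSet]
  · have : flagH rk ∅ = 1 := by
      simp [flagH, flagF_eq hrk hsimp ∅ (by simp), fvec_zero hrk hsimp, WW_empty]
    simp [this]

theorem chow_eval (n : ℕ) (rk : P → ℕ) (z : ℂ) (hz : 1 + z ≠ 0) :
    ((chowDualPoly rk n).map (algebraMap ℝ ℂ)).eval z =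
      (1 + z) ^ n * gam ℂ n rk (z / (1 + z) ^ 2) := by
  rw [chowDual_reindex]
  unfold gam
  rw [Polynomial.map_sum, Polynomial.eval_finsetSum, Finset.mul_sum]
  refine Finset.sum_congr rfl fun S hS => ?_
  have hcard : 2 * S.card ≤ n := by
    rcases Nat.eq_zero_or_pos n with rfl | hn
    · rw [Nat.zero_sub, isoSets_zero, Finset.mem_singleton] at hS
      subst hS; simp
    · have := card_isoSets _ S hS; omega
  rw [Polynomial.smul_eq_C_mul]
  simp only [Polynomial.map_mul, Polynomial.map_C, Polynomial.map_pow, Polynomial.map_X,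
    Polynomial.map_add, Polynomial.map_one, Polynomial.eval_mul, Polynomial.eval_C,
    Polynomial.eval_pow, Polynomial.eval_X, Polynomial.eval_add, Polynomial.eval_one]
  have : (1 + z) ^ n = (1 + z) ^ (n - 2 * S.card) * ((1 + z) ^ 2) ^ S.card := by
    rw [← pow_mul, ← pow_add]; congr 1; omega
  rw [this, div_pow]
  have h2 : ((1 + z) ^ 2) ^ S.card ≠ 0 := pow_ne_zero _ (pow_ne_zero _ hz)
  have h3 : (algebraMap ℝ ℂ) (flagH rk S : ℝ) = (flagH rk S : ℂ) := by simp
  rw [h3]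
  field_simp

theorem gam_conj (n : ℕ) (rk : P → ℕ) (t : ℂ) :
    gam ℂ n rk ((starRingEnd ℂ) t) = (starRingEnd ℂ) (gam ℂ n rk t) := by
  unfold gam
  simp [map_sum]

theorem gam_ofReal (n : ℕ) (rk : P → ℕ) (t : ℝ) :
    gam ℂ n rk (t : ℂ) = ((gam ℝ n rk t : ℝ) : ℂ) := by
  unfold gam
  push_cast
  rfl

end Final2

theorem statement2 {P : Type*} [Fintype P] [PartialOrder P] [OrderBot P]
    (n : ℕ) (rk : P → ℕ)
    (hrk : IsRankFunction rk)
    (hsimp : SimplicialOfRank P n)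
    (hpos : ∀ k, 0 ≤ hvec rk n k) :
    RealRooted (chowDualPoly rk n) := by
  intro z hz
  have hz0 := (Polynomial.mem_roots'.1 hz).2
  rw [Polynomial.IsRoot.def] at hz0
  by_contra him
  have hz1 : 1 + z ≠ 0 := by
    intro h
    apply him
    have : z = -1 := by linear_combination h
    rw [this]; simp
  rw [chow_eval n rk z hz1] at hz0
  have hg : gam ℂ n rk (z / (1 + z) ^ 2) = 0 :=
    (mul_eq_zero.1 hz0).resolve_left (pow_ne_zero _ hz1)
  set t := z / (1 + z) ^ 2 with ht
  rcases lt_trichotomy t.im 0 with h | h | h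
  · apply gam_ne_zero_upper hrk hsimp hpos (t := (starRingEnd ℂ) t)
    · simpa using h
    · rw [gam_conj, hg, map_zero]
  · have htr : t = ((t.re : ℝ) : ℂ) := by
      apply Complex.ext <;> simp [h]
    rcases le_or_gt 0 t.re with h0 | h0
    · have h1 := gam_pos_real hrk hsimp hpos h0
      rw [htr, gam_ofReal] at hg
      have : gam ℝ n rk t.re = 0 := by exact_mod_cast hg
      linarith
    · have hq : t * (1 + z) ^ 2 = z := by
        rw [ht]; field_simp
      rw [htr] at hq
      have hre := congrArg Complex.re hq
      have hi := congrArg Complex.im hq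
      simp [pow_two, Complex.mul_re, Complex.mul_im] at hre hi
      generalize t.re = r at *
      generalize z.re = x at *
      generalize z.im = y at *
      have hxy : r * (2 * (1 + x)) = 1 := by
        apply mul_right_cancel₀ him
        linarith
      have hy2 : 0 < y * y := mul_self_pos.2 him
      nlinarith [mul_pos (neg_pos.2 h0) hy2, mul_pos (neg_pos.2 h0) (neg_pos.2 h0)]
  · exact gam_ne_zero_upper hrk hsimp hpos h hg
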